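/- arXiv:2207.01236 — 2 statements merged into one kernel-verified Lean document; each statement's English description precedes it below -/
import Mathlib

section
/- Let ℓ ≥ 2, τ > 0, and let s be a nonempty proper subset of {1, …, ℓ} with cardinality k. Define F = conv({τ·e^{(i)} : i ∈ s}) and G = conv({−τ·e^{(i)} : i ∈ s} ∪ {τ·e^{(j)}, −τ·e^{(j)} : j ∉ s}). Then for every u ∈ F and v ∈ G, the Euclidean distance satisfies ‖u − v‖_2 ≥ τ/√k; in particular, ‖u − v‖_2 ≥ τ/√(ℓ − 1). -/
/-!
The linear functional `x ↦ ∑ i ∈ s, x i` takes the value `τ` at every vertex of the face `F` and is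
at most `0` at every other vertex of the `ℓ¹`-ball, so it separates `F` from `G` by a gap of `τ`.
It is the inner product with the indicator vector of `s`, whose norm is `√k`, and Cauchy–Schwarz
turns the gap into a lower bound for the distance.
-/

open scoped Finset RealInnerProductSpace

section InnerProductSpace

variable {E : Type*} [SeminormedAddCommGroup E] [InnerProductSpace ℝ E]
  {A B : Set E} {w u v : E} {a b : ℝ}

lemma le_inner_of_mem_convexHull (hA : ∀ x ∈ A, a ≤ ⟪w, x⟫) (hu : u ∈ convexHull ℝ A) :
    a ≤ ⟪w, u⟫ :=
  convexHull_min hA (convex_halfSpace_ge (innerₗ E w).isLinear a) hu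

lemma inner_le_of_mem_convexHull (hB : ∀ x ∈ B, ⟪w, x⟫ ≤ b) (hv : v ∈ convexHull ℝ B) :
    ⟪w, v⟫ ≤ b :=
  convexHull_min hB (convex_halfSpace_le (innerₗ E w).isLinear b) hv

lemma sub_le_norm_mul_norm_sub_of_mem_convexHull
    (hA : ∀ x ∈ A, a ≤ ⟪w, x⟫) (hB : ∀ x ∈ B, ⟪w, x⟫ ≤ b)
    (hu : u ∈ convexHull ℝ A) (hv : v ∈ convexHull ℝ B) :
    a - b ≤ ‖w‖ * ‖u - v‖ :=
  calc a - b ≤ ⟪w, u⟫ - ⟪w, v⟫ :=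
        sub_le_sub (le_inner_of_mem_convexHull hA hu) (inner_le_of_mem_convexHull hB hv)
    _ = ⟪w, u - v⟫ := (inner_sub_right w u v).symm
    _ ≤ ‖w‖ * ‖u - v‖ := real_inner_le_norm w (u - v)

end InnerProductSpace

section EuclideanSpace

variable {ι : Type*} [Fintype ι] [DecidableEq ι]

/-- The `0`-`1` indicator vector of `s` in Euclidean space; the inner product with it is the sum of
the coordinates indexed by `s`. -/
noncomputable def indicatorVector (s : Finset ι) : EuclideanSpace ℝ ι :=
  WithLp.toLp 2 fun i => if i ∈ s then 1 else 0

lemma norm_indicatorVector (s : Finset ι) : ‖indicatorVector s‖ = √(#s) := by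
  simp [indicatorVector, EuclideanSpace.norm_eq]

lemma inner_indicatorVector_single (s : Finset ι) (i : ι) (c : ℝ) :
    ⟪indicatorVector s, EuclideanSpace.single i c⟫ = if i ∈ s then c else 0 := by
  simp [indicatorVector, EuclideanSpace.inner_single_right]

lemma le_sqrt_card_mul_norm_sub_of_mem_convexHull_single {s : Finset ι} {τ : ℝ} (hτ : 0 ≤ τ)
    {u v : EuclideanSpace ℝ ι}
    (hu : u ∈ convexHull ℝ ((fun i => EuclideanSpace.single i τ) '' ↑s))
    (hv : v ∈ convexHull ℝ
      (((fun i => EuclideanSpace.single i (-τ)) '' ↑s) ∪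
       ((fun j => EuclideanSpace.single j τ) '' ↑sᶜ) ∪
       ((fun j => EuclideanSpace.single j (-τ)) '' ↑sᶜ))) :
    τ ≤ √(#s) * ‖u - v‖ := by
  rw [← norm_indicatorVector, ← sub_zero τ]
  refine sub_le_norm_mul_norm_sub_of_mem_convexHull ?_ ?_ hu hv
  · rintro _ ⟨i, hi, rfl⟩
    rw [inner_indicatorVector_single, if_pos (Finset.mem_coe.mp hi)]
  · rintro _ ((⟨i, hi, rfl⟩ | ⟨j, hj, rfl⟩) | ⟨j, hj, rfl⟩)
    · rw [inner_indicatorVector_single, if_pos (Finset.mem_coe.mp hi)]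
      exact neg_nonpos.mpr hτ
    · rw [inner_indicatorVector_single, if_neg (Finset.mem_compl.mp (Finset.mem_coe.mp hj))]
    · rw [inner_indicatorVector_single, if_neg (Finset.mem_compl.mp (Finset.mem_coe.mp hj))]

end EuclideanSpace

theorem dist_face_complement_ge
    (ℓ : ℕ) (hℓ : 2 ≤ ℓ) (τ : ℝ) (hτ : 0 < τ)
    (s : Finset (Fin ℓ)) (hs : s.Nonempty) (hs' : s ≠ Finset.univ)
    (k : ℕ) (hk : s.card = k)
    (F G : Set (EuclideanSpace ℝ (Fin ℓ)))
    (hF : F = convexHull ℝ ((fun i => EuclideanSpace.single i τ) '' ↑s))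
    (hG : G = convexHull ℝ
      (((fun i => EuclideanSpace.single i (-τ)) '' ↑s) ∪
       ((fun j => EuclideanSpace.single j τ) '' ↑sᶜ) ∪
       ((fun j => EuclideanSpace.single j (-τ)) '' ↑sᶜ))) :
    ∀ u ∈ F, ∀ v ∈ G,
      τ / Real.sqrt k ≤ ‖u - v‖ ∧ τ / Real.sqrt ((ℓ : ℝ) - 1) ≤ ‖u - v‖ := by
  subst hk hF hG
  intro u hu v hv
  have gap : τ ≤ √(#s) * ‖u - v‖ :=
    le_sqrt_card_mul_norm_sub_of_mem_convexHull_single hτ.le hu hv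
  have card_lt : #s < ℓ := by
    simpa only [Fintype.card_fin] using (Finset.card_lt_iff_ne_univ s).mpr hs'
  have card_le : (#s : ℝ) ≤ ℓ - 1 := le_sub_iff_add_le.mpr (by exact_mod_cast card_lt)
  have bound_of_card_le {c : ℝ} (hc : (#s : ℝ) ≤ c) : τ / √c ≤ ‖u - v‖ := by
    refine div_le_of_le_mul₀ (Real.sqrt_nonneg c) (norm_nonneg _) ?_
    calc τ ≤ √(#s) * ‖u - v‖ := gap
      _ ≤ √c * ‖u - v‖ := by gcongr
      _ = ‖u - v‖ * √c := mul_comm _ _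
  exact ⟨bound_of_card_le le_rfl, bound_of_card_le card_le⟩
end

section
/- Let A ∈ ℝ^{m×ℓ} with B = AᵀA invertible, and let b ∈ ℝ^m with β := ‖b‖_2^2 > 0. Set w = Aᵀb and p = B^{−1}w, and suppose q := wᵀp ≠ β. Define ñ₂ = −(1/β)·(B^{−1} + p·pᵀ/(β − q))·w ∈ ℝ^ℓ, ñ₃ = (1 − wᵀñ₂)/β ∈ ℝ, and Ñ₁ = B^{−1} − p·ñ₂ᵀ ∈ ℝ^{ℓ×ℓ}. Then the (ℓ+1) × (ℓ+1) block matrix M with blocks [[B, w], [wᵀ, β]] is invertible, and its inverse is the block matrix [[Ñ₁, ñ₂], [ñ₂ᵀ, ñ₃]]; i.e., [[B, w], [wᵀ, β]] · [[Ñ₁, ñ₂], [ñ₂ᵀ, ñ₃]] = I_{ℓ+1}. -/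
open Matrix

/-!
Block elimination inverts `[[B, u], [vᵀ, a]]` in terms of a right inverse `C` of `B` and the inverse
`c` of the Schur complement `a - vᵀCu`. When `B` is symmetric and `u = v = w`, both `Cu` and `vᵀC`
equal `p = B⁻¹w`. In the formula for `n₂`, the matrix `vecMulVec p p` sends `w` to `q • p`, so `n₂`
is a multiple of `p`, with coefficient `-β⁻¹ (1 + q / (β - q)) = -(β - q)⁻¹`; this identifies the
update formulas with block elimination.
-/

section Bordered

variable {n R : Type*}

/-- The matrix `[[B, u], [vᵀ, a]]` obtained by bordering the square matrix `B` with a column `u`, a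
row `v` and a corner entry `a`. The new index is `Sum.inr ()`. -/
def borderedMatrix (B : Matrix n n R) (u v : n → R) (a : R) : Matrix (n ⊕ Unit) (n ⊕ Unit) R :=
  fromBlocks B (replicateCol Unit u) (replicateRow Unit v) (of fun _ _ => a)

theorem borderedMatrix_one [DecidableEq n] [Zero R] [One R] :
    borderedMatrix (1 : Matrix n n R) 0 0 1 = 1 := by
  rw [← fromBlocks_one, borderedMatrix, replicateCol_zero, replicateRow_zero]
  congr 1

theorem borderedMatrix_mul [Fintype n] [CommSemiring R] (B C : Matrix n n R) (u v x y : n → R)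
    (a c : R) :
    borderedMatrix B u v a * borderedMatrix C x y c =
      borderedMatrix (B * C + vecMulVec u y) (B *ᵥ x + c • u) (v ᵥ* C + a • y)
        (v ⬝ᵥ x + a * c) := by
  rw [borderedMatrix, borderedMatrix, fromBlocks_multiply, borderedMatrix]
  congr 1 <;> ext i j <;>
    simp [Matrix.mul_apply, vecMulVec_apply, mulVec, vecMul, dotProduct, mul_comm]

theorem borderedMatrix_mul_eq_one [Fintype n] [DecidableEq n] [CommRing R] {B C : Matrix n n R}
    (hBC : B * C = 1) {u v : n → R} {a c : R} (hc : (a - v ⬝ᵥ C *ᵥ u) * c = 1) :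
    borderedMatrix B u v a *
      borderedMatrix (C + c • vecMulVec (C *ᵥ u) (v ᵥ* C)) (-c • C *ᵥ u) (-c • v ᵥ* C) c = 1 := by
  have hBCu : B *ᵥ C *ᵥ u = u := by rw [mulVec_mulVec, hBC, one_mulVec]
  have block_eq :
      B * (C + c • vecMulVec (C *ᵥ u) (v ᵥ* C)) + vecMulVec u (-c • v ᵥ* C) = 1 := by
    rw [Matrix.mul_add, hBC, Matrix.mul_smul, mul_vecMulVec, hBCu, vecMulVec_smul]
    module
  have column_eq : B *ᵥ (-c • C *ᵥ u) + c • u = 0 := by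
    rw [mulVec_smul, hBCu]
    module
  have row_eq :
      v ᵥ* (C + c • vecMulVec (C *ᵥ u) (v ᵥ* C)) + a • (-c • v ᵥ* C) = 0 := by
    rw [vecMul_add, vecMul_smul, vecMul_vecMulVec]
    linear_combination (norm := module) -hc • v ᵥ* C
  have corner_eq : v ⬝ᵥ (-c • C *ᵥ u) + a * c = 1 := by
    rw [dotProduct_smul, smul_eq_mul]
    linear_combination hc
  rw [borderedMatrix_mul, block_eq, column_eq, row_eq, corner_eq, borderedMatrix_one]

end Bordered

section Update

variable {n K : Type*} [Fintype n] [Field K]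

theorem update_column_eq_neg_inv_smul {C : Matrix n n K} {w p : n → K} (hp : p = C *ᵥ w)
    {β q : K} (hβ : β ≠ 0) (hq : q = w ⬝ᵥ p) (hne : q ≠ β) :
    -(1 / β) • ((C + (1 / (β - q)) • vecMulVec p p) *ᵥ w) = -(β - q)⁻¹ • p := by
  have hs : β - q ≠ 0 := sub_ne_zero.mpr hne.symm
  have hpw : vecMulVec p p *ᵥ w = q • p := by
    rw [vecMulVec_mulVec, op_smul_eq_smul, dotProduct_comm, hq]
  have coefficient_eq : -(1 / β) * (1 + 1 / (β - q) * q) = -(β - q)⁻¹ := by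
    field_simp
    ring
  rw [add_mulVec, smul_mulVec, hpw, ← hp, ← coefficient_eq]
  module

theorem update_corner_eq_inv {w p : n → K} {β q : K} (hβ : β ≠ 0) (hq : q = w ⬝ᵥ p)
    (hne : q ≠ β) : (1 - w ⬝ᵥ (-(β - q)⁻¹ • p)) / β = (β - q)⁻¹ := by
  have hs : β - q ≠ 0 := sub_ne_zero.mpr hne.symm
  rw [dotProduct_smul, ← hq, smul_eq_mul]
  field_simp
  ring

theorem block_gram_inverse_update_general [DecidableEq n]
    {B : Matrix n n K} (hBsymm : B.IsSymm) (hBinv : IsUnit B) {β : K} (hβ : β ≠ 0)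
    {w p : n → K} (hp : p = B⁻¹ *ᵥ w) {q : K} (hq : q = w ⬝ᵥ p) (hne : q ≠ β)
    {n₂ : n → K} (hn₂ : n₂ = -(1 / β) • ((B⁻¹ + (1 / (β - q)) • vecMulVec p p) *ᵥ w))
    {n₃ : K} (hn₃ : n₃ = (1 - w ⬝ᵥ n₂) / β)
    {N₁ : Matrix n n K} (hN₁ : N₁ = B⁻¹ - vecMulVec p n₂) :
    IsUnit (borderedMatrix B w w β) ∧
      borderedMatrix B w w β * borderedMatrix N₁ n₂ n₂ n₃ = 1 := by
  have hBB : B * B⁻¹ = 1 := mul_nonsing_inv B ((isUnit_iff_isUnit_det B).mp hBinv)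
  have hwB : w ᵥ* B⁻¹ = p := by rw [hp, ← vecMul_transpose, transpose_nonsing_inv, hBsymm.eq]
  have hn₂p : n₂ = -(β - q)⁻¹ • p := hn₂.trans (update_column_eq_neg_inv_smul hp hβ hq hne)
  have hn₃s : n₃ = (β - q)⁻¹ := by rw [hn₃, hn₂p, update_corner_eq_inv hβ hq hne]
  have hN₁p : N₁ = B⁻¹ + (β - q)⁻¹ • vecMulVec p p := by
    rw [hN₁, hn₂p, vecMulVec_smul, neg_smul, sub_neg_eq_add]
  have schur_mul_inv : (β - w ⬝ᵥ B⁻¹ *ᵥ w) * (β - q)⁻¹ = 1 := by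
    rw [← hp, ← hq, mul_inv_cancel₀ (sub_ne_zero.mpr hne.symm)]
  have inverse_eq : borderedMatrix B w w β * borderedMatrix N₁ n₂ n₂ n₃ = 1 := by
    simpa only [hn₂p, hn₃s, hN₁p, ← hp, hwB] using borderedMatrix_mul_eq_one hBB schur_mul_inv
  exact ⟨.of_mul_eq_one _ inverse_eq, inverse_eq⟩

end Update

theorem block_gram_inverse_update
    (m ℓ : ℕ) (A : Matrix (Fin m) (Fin ℓ) ℝ) (b : Fin m → ℝ)
    (B : Matrix (Fin ℓ) (Fin ℓ) ℝ) (hB : B = Aᵀ * A) (hBinv : IsUnit B)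
    (β : ℝ) (hβ : β = ∑ i, (b i) ^ 2) (hβpos : 0 < β)
    (w : Fin ℓ → ℝ) (hw : w = Aᵀ *ᵥ b)
    (p : Fin ℓ → ℝ) (hp : p = B⁻¹ *ᵥ w)
    (q : ℝ) (hq : q = w ⬝ᵥ p) (hne : q ≠ β)
    (n₂ : Fin ℓ → ℝ)
    (hn₂ : n₂ = -(1 / β) • ((B⁻¹ + (1 / (β - q)) • vecMulVec p p) *ᵥ w))
    (n₃ : ℝ) (hn₃ : n₃ = (1 - w ⬝ᵥ n₂) / β)
    (N₁ : Matrix (Fin ℓ) (Fin ℓ) ℝ) (hN₁ : N₁ = B⁻¹ - vecMulVec p n₂)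
    (M : Matrix (Fin ℓ ⊕ Unit) (Fin ℓ ⊕ Unit) ℝ)
    (hM : M = fromBlocks B (Matrix.of fun i (_ : Unit) => w i)
      (Matrix.of fun (_ : Unit) j => w j) (Matrix.of fun (_ : Unit) (_ : Unit) => β)) :
    IsUnit M ∧
    M * fromBlocks N₁ (Matrix.of fun i (_ : Unit) => n₂ i)
      (Matrix.of fun (_ : Unit) j => n₂ j)
      (Matrix.of fun (_ : Unit) (_ : Unit) => n₃) = 1 := by
  have hBsymm : B.IsSymm := by rw [hB, IsSymm, transpose_mul, transpose_transpose]
  exact hM ▸ block_gram_inverse_update_general hBsymm hBinv hβpos.ne' hp hq hne hn₂ hn₃ hN₁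
end
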